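/- arXiv:2002.01178 — 2 statements merged into one kernel-verified Lean document; each statement's English description precedes it below -/
import Mathlib

section
/- Let x and y be binary strings with x[1] = y[1], x[|x|] = y[|y|], and m' := |x̃| ≥ n' := |ỹ|. Then m' − n' is even, and dtw(x,y)² equals the minimum, over all choices of r := (m' − n')/2 indices 2 ≤ i_1 < i_2 < … < i_r ≤ m' − 1 satisfying i_{j+1} ≥ i_j + 2 for all j, of the sum Σ_{j=1}^r |x^{(i_j)}| (for r = 0 this minimum is 0). In particular, dtw(x,y)² equals the optimal value of the Min 1-Separated Sum instance ((|x^{(2)}|, …, |x^{(m'−1)}|), (m'−n')/2). -/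
/-- One step of a warping path: move down, right, or diagonally. -/
def wpStep (a b : ℕ × ℕ) : Prop :=
  (b.1 = a.1 + 1 ∧ b.2 = a.2) ∨ (b.1 = a.1 ∧ b.2 = a.2 + 1) ∨
    (b.1 = a.1 + 1 ∧ b.2 = a.2 + 1)

/-- A warping path of order `m × n` (0-based indices). -/
def IsWarpingPath (m n : ℕ) (p : List (ℕ × ℕ)) : Prop :=
  p.head? = some (0, 0) ∧ p.getLast? = some (m - 1, n - 1) ∧
    List.Chain' wpStep p ∧ ∀ q ∈ p, q.1 < m ∧ q.2 < n

/-- The cost of aligning binary strings `x` and `y` along path `p`: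
the number of aligned mismatching pairs (for binary symbols,
`(x[i] - y[j])^2` is `0` if the symbols agree and `1` otherwise). -/
def pathCost (x y : List Bool) (p : List (ℕ × ℕ)) : ℕ :=
  (p.map fun q => if x.getD q.1 false = y.getD q.2 false then 0 else 1).sum

/-- The squared dynamic time warping distance `dtw(x,y)²` of two binary strings. -/
noncomputable def dtwSq (x y : List Bool) : ℕ :=
  sInf {c | ∃ p, IsWarpingPath x.length y.length p ∧ pathCost x y p = c}

/-- The dynamic time warping distance `dtw(x,y)`. -/
noncomputable def dtw (x y : List Bool) : ℝ :=
  Real.sqrt (dtwSq x y)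

/-- The condensation of a binary string: collapse every maximal run of equal
consecutive symbols to a single symbol. -/
def condense : List Bool → List Bool
  | [] => []
  | [a] => [a]
  | a :: b :: rest => if a = b then condense (b :: rest) else a :: condense (b :: rest)

/-- Auxiliary function collecting the block sizes of a binary string. -/
def blockSizesAux : Bool → ℕ → List Bool → List ℕ
  | _, cnt, [] => [cnt]
  | cur, cnt, a :: rest =>
      if a = cur then blockSizesAux cur (cnt + 1) rest
      else cnt :: blockSizesAux a 1 rest

/-- The list of block sizes of a binary string (sizes of the maximal runs
of equal consecutive symbols, from left to right). -/
def blockSizes : List Bool → List ℕ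
  | [] => []
  | a :: rest => blockSizesAux a 1 rest

/-- The objective `F(z) = Σᵢ dtw(sᵢ, z)²`. -/
noncomputable def Fobj (ss : List (List Bool)) (z : List Bool) : ℕ :=
  (ss.map fun s => dtwSq s z).sum

/-- `z` is a mean of the strings `ss`: a nonempty binary string minimizing
`F` among all nonempty binary strings. -/
def IsMean (ss : List (List Bool)) (z : List Bool) : Prop :=
  z ≠ [] ∧ ∀ w : List Bool, w ≠ [] → Fobj ss z ≤ Fobj ss w

/-- The optimal value of a Min 1-Separated Sum instance with integers `b`
(1-based indexing) and selection size `r`: minimize the sum of `r` selected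
integers, no two of which are consecutive. -/
noncomputable def mssValue (b : List ℕ) (r : ℕ) : ℕ :=
  sInf {s | ∃ I : List ℕ, I.length = r ∧ (∀ i ∈ I, 1 ≤ i ∧ i ≤ b.length) ∧
    List.Chain' (fun a c => a + 2 ≤ c) I ∧
    (I.map fun i => b.getD (i - 1) 0).sum = s}

/-!
Let `r = (|x̃| - |ỹ|) / 2`. An inner block of `x` can be deleted by aligning all of it with a single
opposite symbol of `y`, at a cost equal to its size; its two neighbours then merge, so each deletion
lowers the number of blocks by two, and `r` deletions leave strings which align at no cost.

Conversely, read an alignment from its end. Consuming a symbol `b` of `y` is free and exchanges the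
roles of matched and mismatched blocks of `x`, while consuming a symbol `a ≠ b` of `x` costs one,
and either lengthens the first block or opens a new block of size one. By induction the cost
is at least the sum of some selection of `r` nonadjacent inner blocks. A diagonal step consumes a
symbol of `y` and then one of `x`, so it needs no argument of its own.
-/

/-! ### Block sizes -/

/-- The number of leading symbols `a` of `x`, so that `a :: x` starts with a block of size
`runLength a x + 1`. -/
def runLength (a : Bool) (x : List Bool) : ℕ :=
  (x.takeWhile (· == a)).length

/-- The sizes of the blocks of `x` that remain after its leading symbols `a` are removed. These are
the blocks of `a :: x` other than the first one. -/
def blocksAfter (a : Bool) (x : List Bool) : List ℕ :=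
  blockSizes (x.dropWhile (· == a))

theorem blockSizesAux_eq (a : Bool) (k : ℕ) (x : List Bool) :
    blockSizesAux a k x = (runLength a x + k) :: blocksAfter a x := by
  induction x generalizing k with
  | nil => simp [blockSizesAux, runLength, blocksAfter, blockSizes]
  | cons b x ih =>
    by_cases hb : b = a
    · simp [blockSizesAux, hb, ih, runLength, blocksAfter, add_assoc, add_comm k]
    · simp [blockSizesAux, hb, runLength, blocksAfter, blockSizes]

theorem blockSizes_cons (a : Bool) (x : List Bool) :
    blockSizes (a :: x) = (runLength a x + 1) :: blocksAfter a x :=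
  blockSizesAux_eq a 1 x

@[simp]
theorem blocksAfter_nil (a : Bool) : blocksAfter a [] = [] := rfl

@[simp]
theorem blocksAfter_cons_self (a : Bool) (x : List Bool) :
    blocksAfter a (a :: x) = blocksAfter a x := by
  simp [blocksAfter]

theorem blocksAfter_cons_of_ne {a b : Bool} (h : a ≠ b) (x : List Bool) :
    blocksAfter b (a :: x) = (runLength a x + 1) :: blocksAfter a x := by
  rw [blocksAfter, List.dropWhile_cons_of_neg (by simpa using h), blockSizes_cons]

@[simp]
theorem runLength_cons_self (a : Bool) (x : List Bool) :
    runLength a (a :: x) = runLength a x + 1 := by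
  simp [runLength]

theorem runLength_cons_of_ne {a b : Bool} (h : a ≠ b) (x : List Bool) :
    runLength b (a :: x) = 0 := by
  simp [runLength, h]

theorem blocksAfter_eq_nil_iff {a : Bool} {x : List Bool} :
    blocksAfter a x = [] ↔ x.dropWhile (· == a) = [] := by
  rw [blocksAfter]
  cases x.dropWhile (· == a) with
  | nil => simp [blockSizes]
  | cons b x => simp [blockSizes_cons]

theorem exists_dropWhile_eq_cons_of_blocksAfter_eq_cons {a : Bool} {x : List Bool} {b : ℕ}
    {B : List ℕ} (h : blocksAfter a x = b :: B) :
    ∃ x', x.dropWhile (· == a) = (!a) :: x' ∧ runLength (!a) x' + 1 = b ∧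
      blocksAfter (!a) x' = B := by
  cases hx : x.dropWhile (· == a) with
  | nil => simp [blocksAfter_eq_nil_iff.2 hx] at h
  | cons d x' =>
    have hd : d ≠ a := by
      simpa [hx] using List.head?_dropWhile_not (· == a) x
    obtain rfl : d = !a := Bool.eq_not_of_ne hd
    refine ⟨x', rfl, ?_⟩
    simpa [blocksAfter, hx, blockSizes_cons] using h

theorem length_condense_cons (a : Bool) (x : List Bool) :
    (condense (a :: x)).length = (blocksAfter a x).length + 1 := by
  induction x generalizing a with
  | nil => rfl
  | cons b x ih =>
    by_cases h : a = b
    · simp [condense, h, ih]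
    · simp [condense, h, ih, blocksAfter_cons_of_ne (Ne.symm h)]

theorem even_length_blocksAfter_iff (a : Bool) (x : List Bool) :
    Even (blocksAfter a x).length ↔ x.getLastD a = a := by
  induction x generalizing a with
  | nil => simp
  | cons b x ih =>
    rw [List.getLastD_cons]
    by_cases h : b = a
    · subst h
      simpa using ih b
    · obtain rfl : b = !a := Bool.eq_not_of_ne h
      rw [blocksAfter_cons_of_ne h, List.length_cons, Nat.even_add_one, ih]
      exact Bool.not_eq_not

theorem two_dvd_length_blocksAfter_sub {a : Bool} {x y : List Bool}
    (hlast : (a :: x).getLast? = (a :: y).getLast?)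
    (hle : (blocksAfter a y).length ≤ (blocksAfter a x).length) :
    2 ∣ (blocksAfter a x).length - (blocksAfter a y).length := by
  have hlast' : x.getLastD a = y.getLastD a := by
    simpa [List.getLast?_cons, List.getLastD_eq_getLast?] using hlast
  refine ((Nat.even_sub hle).2 ?_).two_dvd
  rw [even_length_blocksAfter_iff, even_length_blocksAfter_iff, hlast']

/-! ### Sums of nonadjacent entries -/

/-- `SeparatedSum B r s`: some `r` pairwise nonadjacent entries of `B`, none of them the last one,
sum to `s`. The last entry is excluded because for `B = blocksAfter a x` it is the outer block of
`a :: x`, which cannot be deleted. -/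
inductive SeparatedSum : List ℕ → ℕ → ℕ → Prop
  | nil : SeparatedSum [] 0 0
  | skip (b : ℕ) {B : List ℕ} {r s : ℕ} : SeparatedSum B r s → SeparatedSum (b :: B) r s
  | take (b c : ℕ) {B : List ℕ} {r s : ℕ} : SeparatedSum B r s →
      SeparatedSum (b :: c :: B) (r + 1) (b + s)

namespace SeparatedSum

theorem zero (B : List ℕ) : SeparatedSum B 0 0 := by
  induction B with
  | nil => exact nil
  | cons b B ih => exact ih.skip b

theorem two_mul_le_length {B : List ℕ} {r s : ℕ} (h : SeparatedSum B r s) :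
    2 * r ≤ B.length := by
  induction h with
  | nil => simp
  | skip b _ ih => exact ih.trans (by simp)
  | take b c _ ih => simpa [mul_add] using ih

theorem exists_le_tail {B : List ℕ} {r s : ℕ} (h : SeparatedSum B (r + 1) s) :
    ∃ s' ≤ s, SeparatedSum B.tail r s' := by
  generalize hr : r + 1 = r' at h
  induction h with
  | nil => omega
  | @skip b B _ _ _ ih =>
    obtain ⟨s', hs', h'⟩ := ih hr
    refine ⟨s', hs', ?_⟩
    cases B with
    | nil => exact h'
    | cons c B => exact h'.skip c
  | @take b c _ _ s h _ =>
    obtain rfl : r = _ := Nat.succ_injective hr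
    exact ⟨s, Nat.le_add_left s b, h.skip c⟩

theorem exists_le_succ_head {b : ℕ} {B : List ℕ} {r s : ℕ} (h : SeparatedSum (b :: B) r s) :
    ∃ s' ≤ s + 1, SeparatedSum ((b + 1) :: B) r s' := by
  cases h with
  | skip _ h => exact ⟨s, Nat.le_succ s, h.skip _⟩
  | take _ c h => exact ⟨_, by omega, h.take _ c⟩

theorem exists_indices {B : List ℕ} {r s : ℕ} (h : SeparatedSum B r s) (w : ℕ → ℕ) (k : ℕ)
    (hw : ∀ i, i + 1 < B.length → w (k + i) = B.getD i 0) :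
    ∃ I : List ℕ, I.length = r ∧ (∀ i ∈ I, k ≤ i ∧ i + 1 < k + B.length) ∧
      I.IsChain (fun i j => i + 2 ≤ j) ∧ (I.map w).sum = s := by
  induction h generalizing k with
  | nil => exact ⟨[], by simp⟩
  | skip b _ ih =>
    obtain ⟨I, hlen, hmem, hsep, hsum⟩ := ih (k + 1) fun i hi => by
      simpa [add_assoc, add_comm 1] using hw (i + 1) (by simpa using hi)
    refine ⟨I, hlen, fun i hi => ?_, hsep, hsum⟩
    have := hmem i hi
    grind
  | take b c _ ih =>
    obtain ⟨I, hlen, hmem, hsep, hsum⟩ := ih (k + 2) fun i hi => by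
      simpa [add_assoc, add_comm 2] using hw (i + 2) (Nat.add_lt_add_right hi 2)
    have hk : w k = b := by simpa using hw 0 (by simp)
    refine ⟨k :: I, by simp [hlen], fun i hi => ?_, ?_, by simp [hk, hsum]⟩
    · rcases List.mem_cons.1 hi with rfl | hi
      · simp
      · have := hmem i hi
        grind
    · exact List.isChain_cons.2 ⟨fun i hi => (hmem i (List.mem_of_mem_head? hi)).1, hsep⟩

theorem of_indices (w : ℕ → ℕ) :
    ∀ (k : ℕ) (B I : List ℕ), (∀ i, i + 1 < B.length → w (k + i) = B.getD i 0) →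
      (∀ i ∈ I, k ≤ i ∧ i + 1 < k + B.length) → I.IsChain (fun i j => i + 2 ≤ j) →
      SeparatedSum B I.length (I.map w).sum
  | _, B, [], _, _, _ => zero B
  | k, [], i :: I, _, hmem, _ => by
    have := hmem i List.mem_cons_self
    grind
  | k, [b], i :: I, _, hmem, _ => by
    have := hmem i List.mem_cons_self
    grind
  | k, b :: c :: B, i :: I, hw, hmem, hsep => by
    have hgap : ∀ j ∈ I, i + 2 ≤ j := fun j hj =>
      have : Trans (fun i j : ℕ => i + 2 ≤ j) (fun i j => i + 2 ≤ j) (fun i j => i + 2 ≤ j) :=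
        ⟨fun hij hjk => by omega⟩
      hsep.rel_cons hj
    rcases (hmem i List.mem_cons_self).1.eq_or_lt with rfl | hki
    · have hk : w k = b := by simpa using hw 0 (by simp)
      have hrest := of_indices w (k + 2) B I
        (fun j hj => by simpa [add_assoc, add_comm 2] using hw (j + 2) (Nat.add_lt_add_right hj 2))
        (fun j hj => by
          have := hmem j (List.mem_cons_of_mem k hj)
          grind)
        hsep.tail
      simpa [hk] using hrest.take b c
    · refine (of_indices w (k + 1) (c :: B) (i :: I)
        (fun j hj => by simpa [add_assoc, add_comm 1] using hw (j + 1) (by simpa using hj))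
        (fun j hj => ?_) hsep).skip b
      have := hmem j hj
      grind

end SeparatedSum

/-- The weight `w` lets the indices start at any `k` without subtraction. -/
theorem separatedSum_iff_exists_indices {B : List ℕ} {w : ℕ → ℕ} {k : ℕ}
    (hw : ∀ i, i + 1 < B.length → w (k + i) = B.getD i 0) (r s : ℕ) :
    SeparatedSum B r s ↔ ∃ I : List ℕ, I.length = r ∧ (∀ i ∈ I, k ≤ i ∧ i + 1 < k + B.length) ∧
      I.IsChain (fun i j => i + 2 ≤ j) ∧ (I.map w).sum = s := by
  refine ⟨fun h => h.exists_indices w k hw, ?_⟩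
  rintro ⟨I, rfl, hmem, hsep, rfl⟩
  exact SeparatedSum.of_indices w k B I hw hmem hsep

theorem mssValue_dropLast (B : List ℕ) (r : ℕ) :
    mssValue B.dropLast r = sInf {s | SeparatedSum B r s} := by
  have hw (i : ℕ) (hi : i + 1 < B.length) : B.dropLast.getD (1 + i - 1) 0 = B.getD i 0 := by
    grind
  have hrange (i : ℕ) : 1 ≤ i ∧ i ≤ B.dropLast.length ↔ 1 ≤ i ∧ i + 1 < 1 + B.length := by
    grind
  simp only [separatedSum_iff_exists_indices (w := fun i => B.dropLast.getD (i - 1) 0) hw,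
    mssValue, hrange]
  rfl

theorem sInf_selection_cons (b : ℕ) (B : List ℕ) (r : ℕ) :
    sInf {s | ∃ I : List ℕ, I.length = r ∧ (∀ i ∈ I, 2 ≤ i ∧ i ≤ B.length) ∧
      I.IsChain (fun i j => i + 2 ≤ j) ∧ (I.map fun i => (b :: B).getD (i - 1) 0).sum = s} =
      sInf {s | SeparatedSum B r s} := by
  have hw (i : ℕ) (_ : i + 1 < B.length) : (b :: B).getD (2 + i - 1) 0 = B.getD i 0 := by
    grind
  have hrange (i : ℕ) : i ≤ B.length ↔ i + 1 < 2 + B.length := by omega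
  simp only [separatedSum_iff_exists_indices (w := fun i => (b :: B).getD (i - 1) 0) hw, hrange]

/-! ### Alignments and warping paths -/

/-- The cost `(a - b)²` of aligning two binary symbols. -/
def mismatch (a b : Bool) : ℕ := if a = b then 0 else 1

@[simp]
theorem mismatch_self (a : Bool) : mismatch a a = 0 := if_pos rfl

theorem mismatch_of_ne {a b : Bool} (h : a ≠ b) : mismatch a b = 1 := if_neg h

theorem mismatch_comm (a b : Bool) : mismatch a b = mismatch b a := by
  simp only [mismatch, eq_comm]

/-- `AlignsWithCost x y c`: some warping path aligns `x` and `y` at cost `c`. This is the dynamic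
programming form of `dtwSq`, which removes the aligned symbols from the front of the strings. -/
inductive AlignsWithCost : List Bool → List Bool → ℕ → Prop
  | singleton (a b : Bool) : AlignsWithCost [a] [b] (mismatch a b)
  | left (a b : Bool) {x y : List Bool} {c : ℕ} : AlignsWithCost x (b :: y) c →
      AlignsWithCost (a :: x) (b :: y) (mismatch a b + c)
  | right (a b : Bool) {x y : List Bool} {c : ℕ} : AlignsWithCost (a :: x) y c →
      AlignsWithCost (a :: x) (b :: y) (mismatch a b + c)
  | diag (a b : Bool) {x y : List Bool} {c : ℕ} : AlignsWithCost x y c →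
      AlignsWithCost (a :: x) (b :: y) (mismatch a b + c)

/-- `IsWarpingPathFrom m n q p`: `p` is a final segment, starting at `q`, of a warping path of order
`m × n`. -/
def IsWarpingPathFrom (m n : ℕ) (q : ℕ × ℕ) (p : List (ℕ × ℕ)) : Prop :=
  p.head? = some q ∧ p.getLast? = some (m - 1, n - 1) ∧ p.IsChain wpStep ∧
    ∀ z ∈ p, z.1 < m ∧ z.2 < n

theorem isWarpingPathFrom_singleton {m n : ℕ} {q : ℕ × ℕ} :
    IsWarpingPathFrom m n q [q] ↔ q.1 + 1 = m ∧ q.2 + 1 = n := by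
  rcases q with ⟨i, j⟩
  simp only [IsWarpingPathFrom, List.head?_cons, List.getLast?_singleton, Option.some.injEq,
    Prod.mk.injEq, List.isChain_singleton, List.mem_singleton, forall_eq, true_and]
  omega

theorem isWarpingPathFrom_cons_cons {m n : ℕ} {q q' : ℕ × ℕ} {p : List (ℕ × ℕ)} :
    IsWarpingPathFrom m n q (q :: q' :: p) ↔
      (q.1 < m ∧ q.2 < n) ∧ wpStep q q' ∧ IsWarpingPathFrom m n q' (q' :: p) := by
  simp only [IsWarpingPathFrom, List.head?_cons, List.getLast?_cons_cons, List.isChain_cons_cons,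
    List.forall_mem_cons]
  tauto

theorem pathCost_cons (x y : List Bool) (q : ℕ × ℕ) (p : List (ℕ × ℕ)) :
    pathCost x y (q :: p) =
      mismatch (x.getD q.1 false) (y.getD q.2 false) + pathCost x y p :=
  rfl

theorem drop_eq_getD_cons {α : Type*} {l : List α} {i : ℕ} (h : i < l.length) (d : α) :
    l.drop i = l.getD i d :: l.drop (i + 1) := by
  rw [List.drop_eq_getElem_cons h, List.getD_eq_getElem l d h]

theorem lt_length_and_eq_of_cons_eq_drop {α : Type*} {l u : List α} {i : ℕ} {a : α}
    (h : a :: u = l.drop i) (d : α) : i < l.length ∧ a = l.getD i d ∧ u = l.drop (i + 1) := by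
  have hi : i < l.length := by
    by_contra! hi
    simp [List.drop_eq_nil_of_le hi] at h
  exact ⟨hi, List.cons.inj (h.trans (drop_eq_getD_cons hi d))⟩

theorem IsWarpingPathFrom.alignsWithCost {x y : List Bool} {q : ℕ × ℕ} {p : List (ℕ × ℕ)}
    (h : IsWarpingPathFrom x.length y.length q (q :: p)) :
    AlignsWithCost (x.drop q.1) (y.drop q.2) (pathCost x y (q :: p)) := by
  induction p generalizing q with
  | nil =>
    obtain ⟨hx, hy⟩ := isWarpingPathFrom_singleton.1 h
    rw [drop_eq_getD_cons (Nat.lt_of_succ_le hx.le) false,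
      drop_eq_getD_cons (Nat.lt_of_succ_le hy.le) false,
      List.drop_eq_nil_of_le hx.ge, List.drop_eq_nil_of_le hy.ge]
    exact .singleton _ _
  | cons q' p ih =>
    obtain ⟨⟨hx, hy⟩, hstep, hp⟩ := isWarpingPathFrom_cons_cons.1 h
    have hrest := ih hp
    rw [pathCost_cons]
    rcases hstep with ⟨h₁, h₂⟩ | ⟨h₁, h₂⟩ | ⟨h₁, h₂⟩ <;> rw [h₁, h₂] at hrest
    · rw [drop_eq_getD_cons hy false] at hrest ⊢
      rw [drop_eq_getD_cons hx false]
      exact hrest.left _ _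
    · rw [drop_eq_getD_cons hx false] at hrest ⊢
      rw [drop_eq_getD_cons hy false]
      exact hrest.right _ _
    · rw [drop_eq_getD_cons hx false, drop_eq_getD_cons hy false]
      exact hrest.diag _ _

theorem exists_isWarpingPathFrom_of_step {x y : List Bool} {q q' : ℕ × ℕ} {c : ℕ}
    (h : ∃ p, IsWarpingPathFrom x.length y.length q' (q' :: p) ∧ pathCost x y (q' :: p) = c)
    (hstep : wpStep q q') (hx : q.1 < x.length) (hy : q.2 < y.length) :
    ∃ p, IsWarpingPathFrom x.length y.length q (q :: p) ∧
      pathCost x y (q :: p) = mismatch (x.getD q.1 false) (y.getD q.2 false) + c := by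
  obtain ⟨p, hp, rfl⟩ := h
  exact ⟨q' :: p, isWarpingPathFrom_cons_cons.2 ⟨⟨hx, hy⟩, hstep, hp⟩, rfl⟩

theorem AlignsWithCost.exists_isWarpingPathFrom {x y u v : List Bool} {c : ℕ}
    (h : AlignsWithCost u v c) (q : ℕ × ℕ) (hu : u = x.drop q.1) (hv : v = y.drop q.2) :
    ∃ p, IsWarpingPathFrom x.length y.length q (q :: p) ∧ pathCost x y (q :: p) = c := by
  induction h generalizing q <;>
    obtain ⟨hx, rfl, hu'⟩ := lt_length_and_eq_of_cons_eq_drop hu false <;>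
    obtain ⟨hy, rfl, hv'⟩ := lt_length_and_eq_of_cons_eq_drop hv false
  case singleton =>
    have hx' := List.drop_eq_nil_iff.1 hu'.symm
    have hy' := List.drop_eq_nil_iff.1 hv'.symm
    exact ⟨[], isWarpingPathFrom_singleton.2 (by omega), rfl⟩
  case left ih =>
    exact exists_isWarpingPathFrom_of_step (ih (q.1 + 1, q.2) hu' hv) (.inl ⟨rfl, rfl⟩) hx hy
  case right ih =>
    exact exists_isWarpingPathFrom_of_step (ih (q.1, q.2 + 1) hu hv') (.inr (.inl ⟨rfl, rfl⟩))
      hx hy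
  case diag ih =>
    exact exists_isWarpingPathFrom_of_step (ih (q.1 + 1, q.2 + 1) hu' hv')
      (.inr (.inr ⟨rfl, rfl⟩)) hx hy

theorem exists_isWarpingPath_iff_alignsWithCost {x y : List Bool} {c : ℕ} :
    (∃ p, IsWarpingPath x.length y.length p ∧ pathCost x y p = c) ↔ AlignsWithCost x y c := by
  constructor
  · rintro ⟨p, hp, rfl⟩
    obtain ⟨p, rfl⟩ := List.head?_eq_some_iff.1 hp.1
    exact IsWarpingPathFrom.alignsWithCost hp
  · intro h
    obtain ⟨p, hp, hc⟩ := h.exists_isWarpingPathFrom (0, 0) rfl rfl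
    exact ⟨_, hp, hc⟩

/-! ### Deleting blocks -/

namespace AlignsWithCost

theorem left_ne_nil {x y : List Bool} {c : ℕ} (h : AlignsWithCost x y c) : x ≠ [] := by
  cases h <;> exact List.cons_ne_nil _ _

protected theorem symm {x y : List Bool} {c : ℕ} (h : AlignsWithCost x y c) :
    AlignsWithCost y x c := by
  induction h with
  | singleton a b => exact mismatch_comm a b ▸ singleton b a
  | left a b _ ih => exact mismatch_comm a b ▸ ih.right b a
  | right a b _ ih => exact mismatch_comm a b ▸ ih.left b a
  | diag a b _ ih => exact mismatch_comm a b ▸ ih.diag b a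

theorem left_self {a : Bool} {x y : List Bool} {c : ℕ} (h : AlignsWithCost x (a :: y) c) :
    AlignsWithCost (a :: x) (a :: y) c := by
  simpa using h.left a a

theorem diag_self (a : Bool) {x y : List Bool} {c : ℕ} (h : AlignsWithCost x y c) :
    AlignsWithCost (a :: x) (a :: y) c := by
  simpa using h.diag a a

theorem extend_run_left {a b : Bool} {x y : List Bool} {c : ℕ}
    (h : AlignsWithCost (a :: x.dropWhile (· == a)) (b :: y) c) :
    AlignsWithCost (a :: x) (b :: y) (runLength a x * mismatch a b + c) := by
  induction x with
  | nil => simpa [runLength] using h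
  | cons d x ih =>
    by_cases hd : d = a
    · subst hd
      rw [runLength_cons_self, add_one_mul, add_right_comm, add_comm _ (mismatch d b)]
      exact (ih (by simpa using h)).left d b
    · simpa [hd, runLength_cons_of_ne hd] using h

theorem extend_run_left_self {a : Bool} {x y : List Bool} {c : ℕ}
    (h : AlignsWithCost (a :: x.dropWhile (· == a)) (a :: y) c) :
    AlignsWithCost (a :: x) (a :: y) c := by
  simpa using h.extend_run_left

theorem extend_run_self {a : Bool} {x y : List Bool} {c : ℕ}
    (h : AlignsWithCost (a :: x.dropWhile (· == a)) (a :: y.dropWhile (· == a)) c) :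
    AlignsWithCost (a :: x) (a :: y) c :=
  h.extend_run_left_self.symm.extend_run_left_self.symm

theorem insert_block_left {a : Bool} {x y : List Bool} {c : ℕ}
    (h : AlignsWithCost (x.dropWhile (· == !a)) (a :: y) c) :
    AlignsWithCost ((!a) :: x) (a :: y) (runLength (!a) x + 1 + c) := by
  have hne : (!a) ≠ a := Bool.not_ne_self a
  simpa [mismatch_of_ne hne, add_assoc] using (h.left (!a) a).extend_run_left

end AlignsWithCost

theorem SeparatedSum.alignsWithCost {a : Bool} {x y : List Bool} {r s : ℕ}
    (h : SeparatedSum (blocksAfter a x) r s)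
    (hr : 2 * r + (blocksAfter a y).length = (blocksAfter a x).length) :
    AlignsWithCost (a :: x) (a :: y) s := by
  generalize hB : blocksAfter a x = B at h hr
  induction h generalizing a x y with
  | nil =>
    have hy : blocksAfter a y = [] := by simpa using hr
    apply AlignsWithCost.extend_run_self
    rw [blocksAfter_eq_nil_iff.1 hB, blocksAfter_eq_nil_iff.1 hy]
    simpa using AlignsWithCost.singleton a a
  | @skip b B r s h ih =>
    obtain ⟨x', hx, -, hx'⟩ := exists_dropWhile_eq_cons_of_blocksAfter_eq_cons hB
    have hbound := h.two_mul_le_length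
    rw [List.length_cons] at hr
    obtain ⟨d, D, hD⟩ : ∃ d D, blocksAfter a y = d :: D :=
      List.exists_cons_of_length_pos (by omega)
    obtain ⟨y', hy, -, hy'⟩ := exists_dropWhile_eq_cons_of_blocksAfter_eq_cons hD
    have hr' : 2 * r + (blocksAfter (!a) y').length = B.length := by
      rw [hD, List.length_cons] at hr
      rw [hy']
      omega
    apply AlignsWithCost.extend_run_self
    rw [hx, hy]
    exact (ih hx' hr').diag_self a
  | take b c _ ih =>
    obtain ⟨x', hx, rfl, hx'⟩ := exists_dropWhile_eq_cons_of_blocksAfter_eq_cons hB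
    obtain ⟨x'', hxx, -, hx''⟩ := exists_dropWhile_eq_cons_of_blocksAfter_eq_cons hx'
    rw [Bool.not_not] at hxx hx''
    have hmerged := ih (y := y) hx'' (by simp only [List.length_cons] at hr; omega)
    rw [← hxx] at hmerged
    apply AlignsWithCost.extend_run_left_self
    rw [hx]
    exact hmerged.insert_block_left.left_self

/-! ### The lower bound -/

/-- `SeparatedSumBound B n c`: if deleting `r` blocks reduces the length of `B` to `n`, then some
`r` nonadjacent entries of `B` have sum at most `c`. For `B = blocksAfter b x` and
`n = (blocksAfter b y).length` this is the potential that bounds the cost of aligning `x` with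
`b :: y` from below. -/
def SeparatedSumBound (B : List ℕ) (n c : ℕ) : Prop :=
  ∀ r, 2 * r + n = B.length → ∃ s ≤ c, SeparatedSum B r s

namespace SeparatedSumBound

theorem of_length_le_one {B : List ℕ} (h : B.length ≤ 1) (n c : ℕ) : SeparatedSumBound B n c := by
  intro r hr
  obtain rfl : r = 0 := by omega
  exact ⟨0, c.zero_le, .zero B⟩

variable {b : ℕ} {B : List ℕ} {n c : ℕ}

theorem mono {c' : ℕ} (h : SeparatedSumBound B n c) (hc : c ≤ c') : SeparatedSumBound B n c' := by
  intro r hr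
  obtain ⟨s, hs, hB⟩ := h r hr
  exact ⟨s, hs.trans hc, hB⟩

theorem tail (h : SeparatedSumBound (b :: B) n c) : SeparatedSumBound B (n + 1) c := by
  intro r hr
  obtain ⟨s, hs, hB⟩ := h (r + 1) (by rw [List.length_cons]; omega)
  obtain ⟨s', hs', hB'⟩ := hB.exists_le_tail
  exact ⟨s', hs'.trans hs, hB'⟩

theorem cons (h : SeparatedSumBound B n c) (b : ℕ) : SeparatedSumBound (b :: B) (n + 1) c := by
  intro r hr
  obtain ⟨s, hs, hB⟩ := h r (by rw [List.length_cons] at hr; omega)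
  exact ⟨s, hs, hB.skip b⟩

theorem cons_cons (h : SeparatedSumBound B n c) (b d : ℕ) :
    SeparatedSumBound (b :: d :: B) n (b + c) := by
  rintro (_ | r) hr
  · exact ⟨0, Nat.zero_le _, .zero _⟩
  · obtain ⟨s, hs, hB⟩ := h r (by simp only [List.length_cons] at hr; omega)
    exact ⟨b + s, Nat.add_le_add_left hs b, hB.take b d⟩

theorem succ_head (h : SeparatedSumBound (b :: B) n c) :
    SeparatedSumBound ((b + 1) :: B) n (1 + c) := by
  intro r hr
  obtain ⟨s, hs, hB⟩ := h r hr
  obtain ⟨s', hs', hB'⟩ := hB.exists_le_succ_head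
  exact ⟨s', by omega, hB'⟩

theorem blocksAfter_cons_left {b : Bool} {x : List Bool} (hx : x ≠ [])
    (h : SeparatedSumBound (blocksAfter b x) n c) (a : Bool) :
    SeparatedSumBound (blocksAfter b (a :: x)) n (mismatch a b + c) := by
  by_cases hab : a = b
  · subst hab
    simpa using h
  obtain rfl : a = !b := Bool.eq_not_of_ne hab
  obtain ⟨a', x, rfl⟩ := List.exists_cons_of_ne_nil hx
  rw [mismatch_of_ne hab, blocksAfter_cons_of_ne hab]
  by_cases ha' : a' = !b
  · subst ha'
    rw [blocksAfter_cons_of_ne hab] at h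
    simpa using h.succ_head
  · obtain rfl : a' = b := by simpa using ha'
    rw [blocksAfter_cons_self] at h
    rw [runLength_cons_of_ne ha', blocksAfter_cons_of_ne ha']
    exact h.cons_cons 1 _

theorem blocksAfter_not {b : Bool} {x : List Bool} (hx : x ≠ [])
    (h : SeparatedSumBound (blocksAfter (!b) x) n c) :
    SeparatedSumBound (blocksAfter b x) (n + 1) c := by
  obtain ⟨a, x, rfl⟩ := List.exists_cons_of_ne_nil hx
  by_cases hab : a = b
  · subst hab
    rw [blocksAfter_cons_of_ne (Bool.self_ne_not a)] at h
    simpa using h.tail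
  · obtain rfl : a = !b := Bool.eq_not_of_ne hab
    rw [blocksAfter_cons_self] at h
    rw [blocksAfter_cons_of_ne hab]
    exact h.cons _

theorem blocksAfter_cons_right {b b' : Bool} {x y : List Bool} (hx : x ≠ [])
    (h : SeparatedSumBound (blocksAfter b' x) (blocksAfter b' y).length c) :
    SeparatedSumBound (blocksAfter b x) (blocksAfter b (b' :: y)).length c := by
  by_cases hb : b' = b
  · subst hb
    simpa using h
  · obtain rfl : b' = !b := Bool.eq_not_of_ne hb
    rw [blocksAfter_cons_of_ne hb]
    exact h.blocksAfter_not hx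

end SeparatedSumBound

theorem AlignsWithCost.separatedSumBound {b : Bool} {x y : List Bool} {c : ℕ}
    (h : AlignsWithCost x (b :: y) c) :
    SeparatedSumBound (blocksAfter b x) (blocksAfter b y).length c := by
  generalize hz : b :: y = z at h
  induction h generalizing b y with
  | singleton a d =>
    refine .of_length_le_one ?_ _ _
    by_cases had : a = b
    · simp [had]
    · simp [blocksAfter_cons_of_ne had]
  | left a d h ih =>
    obtain ⟨rfl, rfl⟩ := List.cons.inj hz
    exact (ih rfl).blocksAfter_cons_left h.left_ne_nil a
  | right a d h ih =>
    obtain ⟨rfl, rfl⟩ := List.cons.inj hz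
    obtain ⟨b', y, rfl⟩ := List.exists_cons_of_ne_nil h.symm.left_ne_nil
    exact ((ih rfl).blocksAfter_cons_right (List.cons_ne_nil a _)).mono (Nat.le_add_left _ _)
  | diag a d h ih =>
    obtain ⟨rfl, rfl⟩ := List.cons.inj hz
    obtain ⟨b', y, rfl⟩ := List.exists_cons_of_ne_nil h.symm.left_ne_nil
    exact ((ih rfl).blocksAfter_cons_right h.left_ne_nil).blocksAfter_cons_left h.left_ne_nil a

theorem dtwSq_cons_eq_sInf_separatedSum {a : Bool} {x y : List Bool} {r : ℕ}
    (hr : 2 * r + (blocksAfter a y).length = (blocksAfter a x).length) :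
    dtwSq (a :: x) (a :: y) = sInf {s | SeparatedSum (blocksAfter a x) r s} := by
  simp only [dtwSq, exists_isWarpingPath_iff_alignsWithCost]
  refine csInf_eq_csInf_of_forall_exists_le (fun c hc => ?_) fun s hs =>
    ⟨s, SeparatedSum.alignsWithCost hs hr, le_rfl⟩
  obtain ⟨s, hsc, hs⟩ := AlignsWithCost.separatedSumBound hc r (by simpa using hr)
  exact ⟨s, by simpa using hs, hsc⟩

/-- For binary strings `x`, `y` with equal first symbols, equal
last symbols, and `m' = |x̃| ≥ n' = |ỹ|`: `m' - n'` is even, `dtw(x,y)²` is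
the minimum over all selections of `r = (m'-n')/2` pairwise non-adjacent
indices `2 ≤ i₁ < … < i_r ≤ m'-1` of the sum of the corresponding block sizes
of `x`, and hence equals the optimal value of the MSS instance
`((|x⁽²⁾|, …, |x^{(m'-1)}|), (m'-n')/2)`. -/
theorem binary_dtw_eq_mss (x y : List Bool) (hx : x ≠ []) (hy : y ≠ [])
    (hhead : x.head? = y.head?) (hlast : x.getLast? = y.getLast?)
    (hm : (condense y).length ≤ (condense x).length) :
    2 ∣ ((condense x).length - (condense y).length) ∧
    dtwSq x y = sInf {s | ∃ I : List ℕ,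
        I.length = ((condense x).length - (condense y).length) / 2 ∧
        (∀ i ∈ I, 2 ≤ i ∧ i ≤ (condense x).length - 1) ∧
        List.Chain' (fun a c => a + 2 ≤ c) I ∧
        (I.map fun i => (blockSizes x).getD (i - 1) 0).sum = s} ∧
    dtwSq x y = mssValue (((blockSizes x).drop 1).dropLast)
        (((condense x).length - (condense y).length) / 2) := by
  obtain ⟨a, x, rfl⟩ := List.exists_cons_of_ne_nil hx
  obtain ⟨b, y, rfl⟩ := List.exists_cons_of_ne_nil hy
  obtain rfl : a = b := by simpa using hhead
  simp only [length_condense_cons, Nat.add_sub_add_right, Nat.add_sub_cancel,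
    Nat.add_le_add_iff_right] at hm ⊢
  have heven := two_dvd_length_blocksAfter_sub hlast hm
  have hr : 2 * (((blocksAfter a x).length - (blocksAfter a y).length) / 2) +
      (blocksAfter a y).length = (blocksAfter a x).length := by omega
  have hdtw := dtwSq_cons_eq_sInf_separatedSum hr
  refine ⟨heven, ?_, ?_⟩
  · rw [hdtw, blockSizes_cons]
    exact (sInf_selection_cons _ _ _).symm
  · rw [hdtw, blockSizes_cons, List.drop_one, List.tail_cons, mssValue_dropLast]
end

section
/- For all binary strings x and y, dtw(x̃, y) ≤ dtw(x, y), where x̃ is the condensation of x. -/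
/-!
Sending every position of `x` to the index of its run maps each warping path between `x` and `y`
to a sequence of index pairs between `condense x` and `y` with the same total cost. In this image a
step is either a warping step or stays in place, so deleting the repetitions gives a warping path
whose cost can only be smaller.
-/

section Destutter

variable {α : Type*} {R : α → α → Prop} [DecidableRel R]

theorem head?_destutter' (a : α) (l : List α) : (l.destutter' R a).head? = some a := by
  induction l with
  | nil => rfl
  | cons b l ih =>
    by_cases hab : R a b
    · rw [List.destutter'_cons_pos _ hab, List.head?_cons]
    · rw [List.destutter'_cons_neg _ hab, ih]

theorem head?_destutter (l : List α) : (l.destutter R).head? = l.head? := by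
  cases l with
  | nil => rfl
  | cons a l => exact head?_destutter' a l

theorem getLast?_destutter'_of_isChain_reflGen {a : α} {l : List α}
    (hl : (a :: l).IsChain (Relation.ReflGen R)) :
    (l.destutter' R a).getLast? = (a :: l).getLast? := by
  induction l generalizing a with
  | nil => rfl
  | cons b l ih =>
    rw [List.isChain_cons_cons] at hl
    rw [List.getLast?_cons_cons, ← ih hl.2]
    by_cases hab : R a b
    · rw [List.destutter'_cons_pos _ hab, List.getLast?_cons_of_ne_nil]
      exact List.destutter'_ne_nil _ _
    · rw [List.destutter'_cons_neg _ hab]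
      cases hl.1 with
      | refl => rfl
      | single h => exact absurd h hab

theorem getLast?_destutter_of_isChain_reflGen {l : List α}
    (hl : l.IsChain (Relation.ReflGen R)) : (l.destutter R).getLast? = l.getLast? := by
  cases l with
  | nil => rfl
  | cons a l => exact getLast?_destutter'_of_isChain_reflGen hl

end Destutter

instance : DecidableRel wpStep := fun _ _ => inferInstanceAs (Decidable (_ ∨ _ ∨ _))

theorem IsWarpingPath.concat {m n : ℕ} {p : List (ℕ × ℕ)} (hp : IsWarpingPath (m + 1) (n + 1) p)
    {q : ℕ × ℕ} (hq : wpStep (m, n) q) : IsWarpingPath (q.1 + 1) (q.2 + 1) (p ++ [q]) := by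
  obtain ⟨hhead, hlast, hchain, hbound⟩ := hp
  refine ⟨?_, ?_, ?_, ?_⟩
  · rw [List.head?_append, hhead, Option.some_or]
  · exact List.getLast?_concat
  · refine List.IsChain.append hchain (List.isChain_singleton q) ?_
    simpa [hlast] using hq
  · have hle : m ≤ q.1 ∧ n ≤ q.2 := by unfold wpStep at hq; omega
    intro r hr
    rcases List.mem_append.1 hr with hr | hr
    · have := hbound r hr
      omega
    · rw [List.mem_singleton.1 hr]
      exact ⟨q.1.lt_succ_self, q.2.lt_succ_self⟩

theorem exists_isWarpingPath_succ_succ (m n : ℕ) : ∃ p, IsWarpingPath (m + 1) (n + 1) p := by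
  induction m with
  | zero =>
    induction n with
    | zero => exact ⟨[(0, 0)], rfl, rfl, List.isChain_singleton _, by simp⟩
    | succ n ih =>
      obtain ⟨p, hp⟩ := ih
      exact ⟨_, hp.concat (q := (0, n + 1)) (by simp [wpStep])⟩
  | succ m ih =>
    obtain ⟨p, hp⟩ := ih
    exact ⟨_, hp.concat (q := (m + 1, n)) (by simp [wpStep])⟩

theorem exists_isWarpingPath {m n : ℕ} (hm : m ≠ 0) (hn : n ≠ 0) : ∃ p, IsWarpingPath m n p := by
  obtain ⟨m, rfl⟩ := Nat.exists_eq_succ_of_ne_zero hm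
  obtain ⟨n, rfl⟩ := Nat.exists_eq_succ_of_ne_zero hn
  exact exists_isWarpingPath_succ_succ m n

theorem pathCost_le_of_sublist (x y : List Bool) {p p' : List (ℕ × ℕ)} (h : p'.Sublist p) :
    pathCost x y p' ≤ pathCost x y p :=
  (h.map _).sum_le_sum fun _ _ => Nat.zero_le _

theorem dtwSq_le_pathCost {x y : List Bool} {p : List (ℕ × ℕ)}
    (hp : IsWarpingPath x.length y.length p) : dtwSq x y ≤ pathCost x y p :=
  Nat.sInf_le ⟨p, hp, rfl⟩

theorem exists_isWarpingPath_pathCost_eq_dtwSq {x y : List Bool} (hx : x ≠ []) (hy : y ≠ []) :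
    ∃ p, IsWarpingPath x.length y.length p ∧ pathCost x y p = dtwSq x y := by
  obtain ⟨p, hp⟩ := exists_isWarpingPath (List.length_eq_zero_iff.not.2 hx)
    (List.length_eq_zero_iff.not.2 hy)
  have hne : {c | ∃ p, IsWarpingPath x.length y.length p ∧ pathCost x y p = c}.Nonempty :=
    ⟨pathCost x y p, p, hp, rfl⟩
  exact Nat.sInf_mem hne

/-- `f` collapses the string `x` onto the string `z`: `x` arises from `z` by repeating symbols, and
`f` sends each position of `x` to the position of `z` whose symbol it repeats. Comparing with `?`
lookups makes `getElem?_map` also say that `f` maps positions of `x` into `z`. -/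
structure IsCollapseMap {α : Type*} (f : ℕ → ℕ) (x z : List α) : Prop where
  map_zero : f 0 = 0
  map_succ : ∀ i, i + 1 < x.length → f (i + 1) = f i ∨ f (i + 1) = f i + 1
  map_last : f (x.length - 1) = z.length - 1
  getElem?_map : ∀ i < x.length, z[f i]? = x[i]?

/-- The image of a warping path under a map `f` of its row indices, with the pairs that repeat their
predecessor deleted. -/
def collapsePath (f : ℕ → ℕ) (p : List (ℕ × ℕ)) : List (ℕ × ℕ) :=
  (p.map (Prod.map f id)).destutter wpStep

namespace IsCollapseMap

section Strings

variable {α : Type*} {f : ℕ → ℕ} {x z : List α} {a b : α}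

theorem map_lt_length (hf : IsCollapseMap f x z) {i : ℕ} (hi : i < x.length) :
    f i < z.length := by
  obtain ⟨h, -⟩ := List.getElem?_eq_some_iff.1
    ((hf.getElem?_map i hi).trans (List.getElem?_eq_getElem hi))
  exact h

theorem singleton (a : α) : IsCollapseMap (fun _ => 0) [a] [a] where
  map_zero := rfl
  map_succ _ _ := Or.inl rfl
  map_last := rfl
  getElem?_map i hi := by rw [Nat.lt_one_iff.1 hi]

theorem cons_self (hf : IsCollapseMap f (a :: x) z) :
    IsCollapseMap (fun i => f (i - 1)) (a :: a :: x) z where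
  map_zero := hf.map_zero
  map_succ
    | 0, _ => Or.inl rfl
    | i + 1, hi => hf.map_succ i (Nat.lt_of_succ_lt_succ hi)
  map_last := hf.map_last
  getElem?_map
    | 0, _ => hf.getElem?_map 0 (Nat.zero_lt_succ _)
    | i + 1, hi => hf.getElem?_map i (Nat.lt_of_succ_lt_succ hi)

theorem cons_cons (a : α) (hf : IsCollapseMap f (b :: x) z) :
    IsCollapseMap (fun | 0 => 0 | i + 1 => f i + 1) (a :: b :: x) (a :: z) where
  map_zero := rfl
  map_succ
    | 0, _ => Or.inr (congrArg (· + 1) hf.map_zero)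
    | i + 1, hi => (hf.map_succ i (Nat.lt_of_succ_lt_succ hi)).imp
        (congrArg (· + 1)) (congrArg (· + 1))
  map_last := by
    have hlast : f x.length = z.length - 1 := hf.map_last
    have hz : 0 < z.length := Nat.zero_lt_of_lt (hf.map_lt_length (i := 0) (Nat.zero_lt_succ _))
    change f x.length + 1 = z.length
    omega
  getElem?_map
    | 0, _ => rfl
    | i + 1, hi => hf.getElem?_map i (Nat.lt_of_succ_lt_succ hi)

end Strings

theorem exists_condense {x : List Bool} (hx : x ≠ []) :
    ∃ f, IsCollapseMap f x (condense x) := by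
  fun_induction condense x with
  | case1 => exact absurd rfl hx
  | case2 a => exact ⟨_, singleton a⟩
  | case3 a rest ih =>
    obtain ⟨f, hf⟩ := ih (List.cons_ne_nil _ _)
    exact ⟨_, hf.cons_self⟩
  | case4 a b rest _ ih =>
    obtain ⟨f, hf⟩ := ih (List.cons_ne_nil _ _)
    exact ⟨_, hf.cons_cons a⟩

section Paths

variable {f : ℕ → ℕ} {p : List (ℕ × ℕ)}

theorem reflGen_wpStep_map {α : Type*} {x z : List α} (hf : IsCollapseMap f x z) {q r : ℕ × ℕ}
    (hr : r.1 < x.length) (hqr : wpStep q r) :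
    Relation.ReflGen wpStep (Prod.map f id q) (Prod.map f id r) := by
  obtain ⟨i, j⟩ := q
  obtain ⟨k, l⟩ := r
  rw [Relation.reflGen_iff]
  simp only [wpStep, Prod.map_apply, id_eq, Prod.mk.injEq] at hqr hr ⊢
  rcases hqr with ⟨rfl, rfl⟩ | ⟨rfl, rfl⟩ | ⟨rfl, rfl⟩
  · have := hf.map_succ i hr
    omega
  · omega
  · have := hf.map_succ i hr
    omega

theorem isWarpingPath_collapsePath {α : Type*} {x z : List α} {n : ℕ} (hf : IsCollapseMap f x z)
    (hp : IsWarpingPath x.length n p) : IsWarpingPath z.length n (collapsePath f p) := by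
  obtain ⟨hhead, hlast, hchain, hbound⟩ := hp
  have hmap : (p.map (Prod.map f id)).IsChain (Relation.ReflGen wpStep) :=
    (List.isChain_map _).2 <| List.IsChain.imp_of_mem_imp
      (fun _ r _ hr => hf.reflGen_wpStep_map (hbound r hr).1) hchain
  refine ⟨?_, ?_, List.isChain_destutter _ _, ?_⟩
  · rw [collapsePath, head?_destutter, List.head?_map, hhead, Option.map_some, Prod.map_apply,
      hf.map_zero, id_eq]
  · rw [collapsePath, getLast?_destutter_of_isChain_reflGen hmap, List.getLast?_map, hlast,
      Option.map_some, Prod.map_apply, hf.map_last, id_eq]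
  · intro q hq
    obtain ⟨r, hr, rfl⟩ := List.mem_map.1 ((List.destutter_sublist _ _).subset hq)
    exact ⟨hf.map_lt_length (hbound r hr).1, (hbound r hr).2⟩

variable {x y z : List Bool}

theorem pathCost_map (hf : IsCollapseMap f x z) (hp : ∀ q ∈ p, q.1 < x.length) :
    pathCost z y (p.map (Prod.map f id)) = pathCost x y p := by
  unfold pathCost
  rw [List.map_map]
  refine congrArg List.sum (List.map_congr_left fun q hq => ?_)
  simp only [Function.comp_apply, Prod.map_fst, Prod.map_snd, id_eq, List.getD_eq_getElem?_getD,
    hf.getElem?_map q.1 (hp q hq)]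

theorem pathCost_collapsePath_le (hf : IsCollapseMap f x z) (hp : ∀ q ∈ p, q.1 < x.length) :
    pathCost z y (collapsePath f p) ≤ pathCost x y p :=
  (pathCost_le_of_sublist z y (List.destutter_sublist _ _)).trans_eq (hf.pathCost_map hp)

theorem dtwSq_le (hf : IsCollapseMap f x z) (hx : x ≠ []) (hy : y ≠ []) :
    dtwSq z y ≤ dtwSq x y := by
  obtain ⟨p, hp, hcost⟩ := exists_isWarpingPath_pathCost_eq_dtwSq hx hy
  calc dtwSq z y ≤ pathCost z y (collapsePath f p) :=
        dtwSq_le_pathCost (hf.isWarpingPath_collapsePath hp)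
    _ ≤ pathCost x y p := hf.pathCost_collapsePath_le fun q hq => (hp.2.2.2 q hq).1
    _ = dtwSq x y := hcost

end Paths

end IsCollapseMap

/-- condensing a string does not increase the dtw distance. -/
theorem dtw_condense_le (x y : List Bool) (hx : x ≠ []) (hy : y ≠ []) :
    dtw (condense x) y ≤ dtw x y := by
  obtain ⟨f, hf⟩ := IsCollapseMap.exists_condense hx
  exact Real.sqrt_le_sqrt (Nat.cast_le.2 (hf.dtwSq_le hx hy))
end
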